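/- For each i ∈ ℕ let φ_i denote the identity isomorphism of the subgroup 2^iℤ ≤ ℤ onto itself, and let ℤ∗_{φ_i} be the corresponding HNN extension of ℤ (with both associated subgroups equal to 2^iℤ). For each i ≥ 1 let λ̄_i : ℤ∗_{φ_i} → ℤ∗_{φ_{i−1}} be the homomorphism induced by the identity map of ℤ (so λ̄_i restricts to the identity on ℤ and sends stable letter to stable letter). Then every λ̄_i is surjective but not injective, and consequently the inverse sequence {ℤ∗_{φ_i}, λ̄_i} is not pro-monomorphic. -/

import Mathlib

universe u

/-- The composite bonding homomorphism `λ_{i,j} : G_j →* G_i` of an inverse sequence of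
groups, for `i ≤ j`. -/
def invSeqComp {G : ℕ → Type u} [∀ i, Group (G i)] (lam : ∀ i, G (i + 1) →* G i)
    {i j : ℕ} (h : i ≤ j) : G j →* G i :=
  Nat.leRecOn h (fun {k} f => f.comp (lam k)) (MonoidHom.id (G i))

/-- An inverse sequence of groups is **pro-monomorphic** if there exists `i` such that for
every `j ≥ i` there exists `k₀ ≥ j` with `ker (λ_{i,k}) = ker (λ_{j,k})` for all `k ≥ k₀`. -/
def ProMono {G : ℕ → Type u} [∀ i, Group (G i)] (lam : ∀ i, G (i + 1) →* G i) : Prop :=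
  ∃ i : ℕ, ∀ j : ℕ, ∀ hij : i ≤ j, ∃ k₀ : ℕ, ∃ hjk₀ : j ≤ k₀, ∀ k : ℕ, ∀ hk₀k : k₀ ≤ k,
    (invSeqComp lam (hij.trans (hjk₀.trans hk₀k))).ker =
      (invSeqComp lam (hjk₀.trans hk₀k)).ker

/-- An inverse sequence of groups is **semistable** (Mittag-Leffler) if for every `i` there
exists `j ≥ i` such that `Im (λ_{i,k}) = Im (λ_{i,j})` for all `k ≥ j`. -/
def Semistable {G : ℕ → Type u} [∀ i, Group (G i)] (lam : ∀ i, G (i + 1) →* G i) : Prop :=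
  ∀ i : ℕ, ∃ j : ℕ, ∃ hij : i ≤ j, ∀ k : ℕ, ∀ hjk : j ≤ k,
    (invSeqComp lam (hij.trans hjk)).range = (invSeqComp lam hij).range

/-- An inverse sequence of groups is **stable** if it is pro-monomorphic and semistable. -/
def Stable {G : ℕ → Type u} [∀ i, Group (G i)] (lam : ∀ i, G (i + 1) →* G i) : Prop :=
  ProMono lam ∧ Semistable lam

/-- The subgroup `2^iℤ` of `ℤ` (written multiplicatively). -/
def twoPowSubgroup (i : ℕ) : Subgroup (Multiplicative ℤ) :=
  Subgroup.zpowers (Multiplicative.ofAdd ((2 : ℤ) ^ i))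

/-- The action of `ℤ` on `Option (ZMod n)` by translation, fixing `none`. -/
def transHom (n : ℕ) : Multiplicative ℤ →* Equiv.Perm (Option (ZMod n)) where
  toFun g := Equiv.optionCongr (Equiv.addLeft ((Multiplicative.toAdd g : ℤ) : ZMod n))
  map_one' := by
    ext1 x
    cases x <;> simp
  map_mul' a b := by
    ext1 x
    cases x <;> simp [add_assoc]

/-- The commutator of the stable letter and `2^i`. -/
def commEl (k i : ℕ) : HNNExtension (Multiplicative ℤ) (twoPowSubgroup k)
    (twoPowSubgroup k) (MulEquiv.refl _) :=
  HNNExtension.t * HNNExtension.of (Multiplicative.ofAdd ((2 : ℤ) ^ i)) *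
    HNNExtension.t⁻¹ * (HNNExtension.of (Multiplicative.ofAdd ((2 : ℤ) ^ i)))⁻¹

theorem commEl_self (i : ℕ) : commEl i i = 1 := by
  have h := HNNExtension.t_mul_of (φ := MulEquiv.refl (twoPowSubgroup i))
    ⟨Multiplicative.ofAdd ((2 : ℤ) ^ i), Subgroup.mem_zpowers _⟩
  unfold commEl
  simp only [MulEquiv.refl_apply] at h
  rw [h]
  group

theorem transHom_two_pow (i : ℕ) (a : twoPowSubgroup i) :
    transHom (2 ^ i) (a : Multiplicative ℤ) = 1 := by
  obtain ⟨a, m, rfl⟩ := a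
  have h : transHom (2 ^ i) (Multiplicative.ofAdd ((2 : ℤ) ^ i)) = 1 := by
    have h0 : ((2 : ZMod (2 ^ i)) ^ i) = 0 := by
      have := ZMod.natCast_self (2 ^ i)
      exact_mod_cast this
    ext1 x
    cases x <;> simp [transHom, h0]
  simp [h]

theorem commEl_succ_ne (i : ℕ) : commEl (i + 1) i ≠ 1 := by
  intro h
  let F := HNNExtension.lift (φ := MulEquiv.refl (twoPowSubgroup (i + 1)))
    (transHom (2 ^ (i + 1))) (Equiv.swap none (some 0)) (by
      intro a
      simp [transHom_two_pow])
  have h1 := congrArg F h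
  simp only [commEl, map_mul, map_inv, map_one, F, HNNExtension.lift_t,
    HNNExtension.lift_of] at h1
  rw [mul_inv_eq_one, mul_inv_eq_iff_eq_mul] at h1
  have h2 := congrArg (fun e => e none) h1
  simp [transHom] at h2
  have h3 : ((2 ^ i : ℕ) : ZMod (2 ^ (i + 1))) = 0 := by
    push_cast
    first | exact h2 | exact h2.symm
  rw [ZMod.natCast_eq_zero_iff] at h3
  have := Nat.le_of_dvd (by positivity) h3
  rw [pow_succ] at this
  have : 0 < 2 ^ i := by positivity
  omega

/-- Let `φ_i` be the identity isomorphism of the subgroup `2^iℤ ≤ ℤ`, and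
let `ℤ∗_{φ_i}` be the corresponding HNN extension.  The homomorphisms
`λ̄_i : ℤ∗_{φ_i} →* ℤ∗_{φ_{i-1}}` induced by the identity map of `ℤ` (restricting to the
identity on `ℤ` and sending stable letter to stable letter) are all surjective but not
injective, and the resulting inverse sequence `{ℤ∗_{φ_i}, λ̄_i}` is not pro-monomorphic. -/
theorem HNN_sequence_of_identity_not_proMono
    (lamBar : ∀ i : ℕ, HNNExtension (Multiplicative ℤ) (twoPowSubgroup (i + 1))
        (twoPowSubgroup (i + 1)) (MulEquiv.refl _) →*
      HNNExtension (Multiplicative ℤ) (twoPowSubgroup i) (twoPowSubgroup i) (MulEquiv.refl _))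
    (hBarOf : ∀ (i : ℕ) (g : Multiplicative ℤ),
      lamBar i (HNNExtension.of g) = HNNExtension.of g)
    (hBarT : ∀ i : ℕ, lamBar i HNNExtension.t = HNNExtension.t) :
    (∀ i : ℕ, Function.Surjective (lamBar i) ∧ ¬ Function.Injective (lamBar i)) ∧
      ¬ ProMono (G := fun i => HNNExtension (Multiplicative ℤ) (twoPowSubgroup i)
        (twoPowSubgroup i) (MulEquiv.refl _)) lamBar := by
  have hc : ∀ i k, lamBar k (commEl (k + 1) i) = commEl k i := by
    intro i k
    simp [commEl, hBarOf, hBarT]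
  have hcomp : ∀ (i j k : ℕ) (h : j ≤ k),
      invSeqComp (G := fun i => HNNExtension (Multiplicative ℤ) (twoPowSubgroup i)
        (twoPowSubgroup i) (MulEquiv.refl _)) lamBar h (commEl k i) = commEl j i := by
    intro i j k h
    induction k, h using Nat.le_induction with
    | base => simp [invSeqComp, Nat.leRecOn_self]
    | succ k h ih =>
      rw [invSeqComp, Nat.leRecOn_succ h]
      rw [MonoidHom.comp_apply, hc]
      exact ih
  refine ⟨fun i => ⟨?_, ?_⟩, ?_⟩
  · intro x
    induction x using HNNExtension.induction_on with
    | of g => exact ⟨_, hBarOf i g⟩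
    | t => exact ⟨_, hBarT i⟩
    | mul x y hx hy =>
      obtain ⟨a, rfl⟩ := hx
      obtain ⟨b, rfl⟩ := hy
      exact ⟨a * b, map_mul _ _ _⟩
    | inv x hx =>
      obtain ⟨a, rfl⟩ := hx
      exact ⟨a⁻¹, map_inv _ _⟩
  · intro hinj
    apply commEl_succ_ne i
    apply hinj
    rw [hc, commEl_self, map_one]
  · rintro ⟨i, hi⟩
    obtain ⟨k, hk, hk'⟩ := hi (i + 1) (Nat.le_succ i)
    have h := hk' k le_rfl
    have hm := (SetLike.ext_iff.mp h (commEl k i)).mp (by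
      rw [MonoidHom.mem_ker, hcomp, commEl_self])
    rw [MonoidHom.mem_ker, hcomp] at hm
    exact commEl_succ_ne i hm
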